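/- arXiv:2602.03543 — 2 statements merged into one kernel-verified Lean document; each statement's English description precedes it below -/
import Mathlib

section
/- Let m ≥ 1, v_1, …, v_m ≥ 0, p_1, …, p_m ≥ 0 with Σ_{k=1}^m p_k = 1, and c > 0. For each α ∈ [0,1] let τ(α) denote the grade, i.e., the unique real with Σ_{k=1}^m p_k · max(α·v_k − τ(α), 0) = c. Then the function α ↦ τ(α) on [0,1] is continuous and piecewise linear with at most m+1 pieces. -/
/-- A function `f : ℝ → ℝ` is piecewise linear on `[0,1]` with at most `k` pieces:
there are breakpoints `0 = a_0 ≤ a_1 ≤ … ≤ a_k = 1` and affine functions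
`g_j(x) = s_j·x + b_j` with `f = g_j` on `[a_{j−1}, a_j]`. -/
def PiecewiseLinearOn (f : ℝ → ℝ) (k : ℕ) : Prop :=
  ∃ a : Fin (k + 1) → ℝ, a 0 = 0 ∧ a (Fin.last k) = 1 ∧ Monotone a ∧
    ∃ s b : Fin k → ℝ, ∀ j : Fin k, ∀ x ∈ Set.Icc (a j.castSucc) (a j.succ),
      f x = s j * x + b j

theorem key_strict {m : ℕ} {p x y : Fin m → ℝ} {c : ℝ} (hc : 0 < c) (hp : ∀ k, 0 ≤ p k)
    (hy : c ≤ ∑ k, p k * max (y k) 0) (hx : ∑ k, p k * max (x k) 0 ≤ c)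
    (hxy : ∀ k, y k < x k) : False := by
  obtain ⟨k, -, hk⟩ : ∃ k ∈ Finset.univ, 0 < p k * max (y k) 0 := by
    by_contra! h
    have := Finset.sum_nonpos h
    linarith
  have hlt : ∑ k, p k * max (y k) 0 < ∑ k, p k * max (x k) 0 := by
    apply Finset.sum_lt_sum
    · intro i _
      exact mul_le_mul_of_nonneg_left (max_le_max (hxy i).le le_rfl) (hp i)
    · refine ⟨k, Finset.mem_univ _, ?_⟩
      have hpk : 0 < p k := lt_of_le_of_ne (hp k) (by rintro h; rw [← h] at hk; simp at hk)
      have hyk : 0 < y k := by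
        by_contra! h
        rw [max_eq_right h] at hk
        simp at hk
      apply mul_lt_mul_of_pos_left _ hpk
      rw [max_eq_left hyk.le]
      exact lt_max_of_lt_left (hxy k)
  linarith

theorem grade_cont (m : ℕ) (v p : Fin m → ℝ)
    (hv : ∀ k, 0 ≤ v k) (hp : ∀ k, 0 ≤ p k)
    (c : ℝ) (hc : 0 < c) (τ : ℝ → ℝ)
    (hτ : ∀ α ∈ Set.Icc (0 : ℝ) 1, ∑ k, p k * max (α * v k - τ α) 0 = c) :
    ContinuousOn τ (Set.Icc (0 : ℝ) 1) := by
  have hV : 0 ≤ ∑ k, v k := Finset.sum_nonneg fun k _ => hv k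
  have hle : ∀ α ∈ Set.Icc (0 : ℝ) 1, ∀ β ∈ Set.Icc (0 : ℝ) 1,
      τ β ≤ τ α + (∑ k, v k) * |β - α| := by
    intro α hα β hβ
    by_contra! h
    refine key_strict hc hp (hτ β hβ).ge (hτ α hα).le ?_
    intro k
    have h1 : v k ≤ ∑ k, v k := Finset.single_le_sum (fun k _ => hv k) (Finset.mem_univ k)
    have h2 : (β - α) * v k ≤ (∑ k, v k) * |β - α| := by
      calc (β - α) * v k ≤ |β - α| * v k := mul_le_mul_of_nonneg_right (le_abs_self _) (hv k)
        _ ≤ |β - α| * ∑ k, v k := mul_le_mul_of_nonneg_left h1 (abs_nonneg _)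
        _ = _ := mul_comm _ _
    linarith
  apply LipschitzOnWith.continuousOn (K := ⟨∑ k, v k, hV⟩)
  apply LipschitzOnWith.of_dist_le_mul
  intro x hx y hy
  rw [Real.dist_eq, Real.dist_eq, abs_sub_le_iff]
  have h1 := hle x hx y hy
  have h2 := hle y hy x hx
  rw [abs_sub_comm] at h1
  change _ ≤ (∑ k, v k) * |x - y| ∧ _ ≤ (∑ k, v k) * |x - y|
  constructor <;> linarith

theorem grade_piecewise_linear (m : ℕ) (hm : 1 ≤ m) (v p : Fin m → ℝ)
    (hv : ∀ k, 0 ≤ v k) (hp : ∀ k, 0 ≤ p k) (hsum : ∑ k, p k = 1)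
    (c : ℝ) (hc : 0 < c) (τ : ℝ → ℝ)
    (hτ : ∀ α ∈ Set.Icc (0 : ℝ) 1, ∑ k, p k * max (α * v k - τ α) 0 = c) :
    ContinuousOn τ (Set.Icc (0 : ℝ) 1) ∧ PiecewiseLinearOn τ (m + 1) := by
  refine ⟨grade_cont m v p hv hp c hc τ hτ, ?_⟩
  -- thresholds
  have hthr : ∀ k, ∃ t ∈ Set.Icc (0 : ℝ) 1, ∀ α ∈ Set.Icc (0 : ℝ) 1,
      (α ≤ t → τ α ≤ α * v k) ∧ (t ≤ α → t < 1 → α * v k ≤ τ α) := by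
    intro k
    have hsc : ∀ α ∈ Set.Icc (0 : ℝ) 1, ∑ j, p j * max (α * v j - α * v k) 0
        = α * ∑ j, p j * max (v j - v k) 0 := by
      intro α hα
      rw [Finset.mul_sum]
      refine Finset.sum_congr rfl fun j _ => ?_
      have := mul_max_of_nonneg (v j - v k) 0 hα.1
      rw [← mul_sub, mul_left_comm, this, mul_zero]
    set D := ∑ j, p j * max (v j - v k) 0 with hD
    have hA : ∀ α ∈ Set.Icc (0 : ℝ) 1, α * D ≤ c → τ α ≤ α * v k := by
      intro α hα h
      by_contra! h'
      exact key_strict (x := fun j => α * v j - α * v k) hc hp (hτ α hα).ge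
        ((hsc α hα).trans_le h) (fun j => by linarith)
    have hB : ∀ α ∈ Set.Icc (0 : ℝ) 1, c ≤ α * D → α * v k ≤ τ α := by
      intro α hα h
      by_contra! h'
      exact key_strict (y := fun j => α * v j - α * v k) hc hp (h.trans_eq (hsc α hα).symm)
        (hτ α hα).le (fun j => by linarith)
    by_cases hDc : D ≤ c
    · refine ⟨1, by simp, fun α hα => ⟨fun _ => hA α hα ?_, fun _ h => absurd h (lt_irrefl _)⟩⟩
      nlinarith [hα.1, hα.2]
    · push Not at hDc
      have hD0 : 0 < D := hc.trans hDc
      refine ⟨c / D, ⟨by positivity, (div_le_one hD0).2 hDc.le⟩, fun α hα => ⟨fun h => hA α hα ?_,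
        fun h _ => hB α hα ?_⟩⟩
      · exact (le_div_iff₀ hD0).1 h
      · exact (div_le_iff₀ hD0).1 h
  choose t ht htτ using hthr
  let σ := Tuple.sort t
  have hmono : Monotone (t ∘ σ) := Tuple.monotone_sort t
  let a : Fin (m + 1 + 1) → ℝ := fun i =>
    if i.val = 0 then 0 else if h : i.val - 1 < m then t (σ ⟨i.val - 1, h⟩) else 1
  have ha01 : ∀ i, a i ∈ Set.Icc (0 : ℝ) 1 := by
    intro i
    simp only [a]
    split_ifs
    · simp
    · exact ht _
    · simp
  have hamono : Monotone a := by
    intro i j hij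
    have hij' : i.val ≤ j.val := hij
    by_cases hi : i.val = 0
    · have : a i = 0 := by simp only [a]; rw [if_pos hi]
      rw [this]; exact (ha01 j).1
    · by_cases hj : j.val - 1 < m
      · have e1 : a i = t (σ ⟨i.val - 1, by omega⟩) := by
          simp only [a]; rw [if_neg hi, dif_pos (by omega)]
        have e2 : a j = t (σ ⟨j.val - 1, hj⟩) := by
          simp only [a]; rw [if_neg (by omega), dif_pos hj]
        rw [e1, e2]
        apply hmono
        simp only [Fin.mk_le_mk]
        omega
      · have : a j = 1 := by
          simp only [a]; rw [if_neg (by omega), dif_neg hj]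
        rw [this]; exact (ha01 i).2
  have hat : ∀ k, a ⟨(σ.symm k).val + 1, by omega⟩ = t k := by
    intro k
    simp [a]
  let S : Fin (m + 1) → Finset (Fin m) := fun j => Finset.univ.filter fun k => j.val ≤ (σ.symm k).val
  suffices hpc : ∀ j : Fin (m + 1), ∃ s b : ℝ, ∀ x ∈ Set.Icc (a j.castSucc) (a j.succ),
      τ x = s * x + b by
    choose s b hsb using hpc
    exact ⟨a, by simp [a], by simp [a], hamono, s, b, hsb⟩
  intro j
  by_cases hj1 : a j.castSucc = 1
  · refine ⟨0, τ 1, fun x hx => ?_⟩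
    have : x = 1 := le_antisymm (hx.2.trans (ha01 _).2) (hj1 ▸ hx.1)
    rw [this]; ring
  have hj1' : a j.castSucc < 1 := lt_of_le_of_ne (ha01 _).2 hj1
  refine ⟨(∑ k ∈ S j, p k * v k) / ∑ k ∈ S j, p k, - c / ∑ k ∈ S j, p k, ?_⟩
  intro x hx
  have hx01 : x ∈ Set.Icc (0 : ℝ) 1 := ⟨(ha01 _).1.trans hx.1, hx.2.trans (ha01 _).2⟩
  have hin : ∀ k, j.val ≤ (σ.symm k).val → τ x ≤ x * v k := by
    intro k hk
    refine (htτ k x hx01).1 (hx.2.trans ?_)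
    rw [← hat k]
    apply hamono
    rw [Fin.le_def]
    simpa using hk
  have hout : ∀ k, ¬ j.val ≤ (σ.symm k).val → max (x * v k - τ x) 0 = 0 := by
    intro k hk
    have h0 : t k ≤ a j.castSucc := by
      rw [← hat k]
      apply hamono
      rw [Fin.le_def]
      change (σ.symm k).val + 1 ≤ j.val
      omega
    have h2 := (htτ k x hx01).2 (h0.trans hx.1) (h0.trans_lt hj1')
    exact max_eq_right (by linarith)
  have hS : ∑ k ∈ S j, p k * (x * v k - τ x) = c := by
    rw [← hτ x hx01, Finset.sum_filter]
    refine Finset.sum_congr rfl fun k _ => ?_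
    split_ifs with h
    · rw [max_eq_left (by linarith [hin k h])]
    · rw [hout k h, mul_zero]
  have hP : ∑ k ∈ S j, p k ≠ 0 := by
    intro h0
    rw [Finset.sum_eq_zero_iff_of_nonneg fun k _ => hp k] at h0
    rw [Finset.sum_eq_zero fun k hk => by rw [h0 k hk, zero_mul]] at hS
    linarith
  have hE : x * (∑ k ∈ S j, p k * v k) - τ x * ∑ k ∈ S j, p k = c := by
    rw [← hS, Finset.mul_sum, Finset.mul_sum, ← Finset.sum_sub_distrib]
    exact Finset.sum_congr rfl fun k _ => by ring
  field_simp
  linarith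
end

section
/- Let N ≥ 1, s ≥ 1, and let f_1, …, f_N : [0,1] → ℝ be continuous functions, each piecewise linear with at most s pieces. Then there exist an integer T with T ≤ N²·s + 1 and real numbers 0 = t_0 ≤ t_1 ≤ … ≤ t_T = 1 such that for every j ∈ {1,…,T}, every pair of indices a, b ∈ {1,…,N}, and all x, y ∈ [t_{j−1}, t_j], one has (f_a(x) − f_b(x))·(f_a(y) − f_b(y)) ≥ 0. -/
/-- Every point of `[0,1]` lies in some piece. -/
lemma exists_piece {k : ℕ} (hk : 1 ≤ k) (a : Fin (k + 1) → ℝ) (h0 : a 0 = 0)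
    (h1 : a (Fin.last k) = 1) (z : ℝ) (hz : z ∈ Set.Icc (0 : ℝ) 1) :
    ∃ j : Fin k, z ∈ Set.Icc (a j.castSucc) (a j.succ) := by
  by_contra hcon
  push Not at hcon
  have hstep : ∀ j : Fin k, a j.castSucc ≤ z → a j.succ < z := by
    intro j hj
    by_contra hlt
    exact hcon j ⟨hj, not_lt.mp hlt⟩
  have hall : ∀ i : Fin (k + 1), a i ≤ z := by
    intro i
    induction i using Fin.induction with
    | zero => rw [h0]; exact hz.1
    | succ j ih => exact (hstep j ih).le
  obtain ⟨n, rfl⟩ : ∃ n, k = n + 1 := ⟨k - 1, by omega⟩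
  have := hstep (Fin.last n) (hall _)
  rw [Fin.succ_last, h1] at this
  exact absurd hz.2 (not_le.mpr this)

/-- The first coincidence point of `f` and `g` in `[p,1]`. -/
noncomputable def firstZero (f g : ℝ → ℝ) (p : ℝ) : ℝ :=
  sInf {w | w ∈ Set.Icc p 1 ∧ f w = g w}

lemma firstZero_comm (f g : ℝ → ℝ) (p : ℝ) : firstZero f g p = firstZero g f p := by
  unfold firstZero
  congr 1
  ext w
  simp [eq_comm]

lemma firstZero_mem (f g : ℝ → ℝ) (p : ℝ) (hp : 0 ≤ p) :
    firstZero f g p ∈ Set.Icc (0 : ℝ) 1 := by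
  unfold firstZero
  rcases Set.eq_empty_or_nonempty {w | w ∈ Set.Icc p 1 ∧ f w = g w} with h | h
  · rw [h]; simp
  · refine ⟨Real.sInf_nonneg fun w hw => hp.trans hw.1.1, ?_⟩
    obtain ⟨w, hw⟩ := h
    exact (csInf_le ⟨p, fun v hv => hv.1.1⟩ hw).trans hw.1.2

lemma firstZero_between (f g : ℝ → ℝ) (p x z s b s' b' : ℝ) (hpz : p ≤ z) (hz : z ≤ 1)
    (hf : ∀ w ∈ Set.Icc p z, f w = s * w + b) (hg : ∀ w ∈ Set.Icc p z, g w = s' * w + b')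
    (hfg : f z = g z) (hx : f x ≠ g x) (hxz : x < z) :
    x < firstZero f g p ∧ firstZero f g p ≤ z := by
  unfold firstZero
  have hmem : z ∈ {w | w ∈ Set.Icc p 1 ∧ f w = g w} := ⟨⟨hpz, hz⟩, hfg⟩
  refine ⟨?_, csInf_le ⟨p, fun v hv => hv.1.1⟩ hmem⟩
  rcases lt_or_ge x p with h | h
  · exact h.trans_le (le_csInf ⟨z, hmem⟩ fun v hv => hv.1.1)
  · refine hxz.trans_le (le_csInf ⟨z, hmem⟩ fun w hw => ?_)
    by_contra hwz
    push Not at hwz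
    have e1 := hw.2
    rw [hf w ⟨hw.1.1, hwz.le⟩, hg w ⟨hw.1.1, hwz.le⟩] at e1
    rw [hf z ⟨hpz, le_rfl⟩, hg z ⟨hpz, le_rfl⟩] at hfg
    rw [hf x ⟨h, hxz.le⟩, hg x ⟨h, hxz.le⟩] at hx
    have e2 : (s - s') * (z - w) = 0 := by linarith
    rcases mul_eq_zero.mp e2 with e | e
    · have : s = s' := by linarith
      subst this
      exact hx (by linarith)
    · linarith

/-- For `N` continuous piecewise linear functions on `[0,1]`, each
with at most `s` pieces, there is a partition of `[0,1]` into `T ≤ N²·s + 1`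
subintervals on each of which every pairwise difference `f_a − f_b` does not
change sign. -/
theorem sign_constancy_family_pwl (N s : ℕ) (hN : 1 ≤ N) (hs : 1 ≤ s)
    (f : Fin N → ℝ → ℝ)
    (hfc : ∀ a, ContinuousOn (f a) (Set.Icc (0 : ℝ) 1))
    (hf : ∀ a, PiecewiseLinearOn (f a) s) :
    ∃ T : ℕ, 1 ≤ T ∧ T ≤ N ^ 2 * s + 1 ∧
      ∃ t : Fin (T + 1) → ℝ, t 0 = 0 ∧ t (Fin.last T) = 1 ∧ Monotone t ∧
        ∀ j : Fin T, ∀ a b : Fin N,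
          ∀ x ∈ Set.Icc (t j.castSucc) (t j.succ),
            ∀ y ∈ Set.Icc (t j.castSucc) (t j.succ),
              0 ≤ (f a x - f b x) * (f a y - f b y) := by
  classical
  choose p hp0 hp1 hpm sl ic hpl using hf
  have hp : ∀ a i, 0 ≤ p a i := fun a i => by
    rw [← hp0 a]; exact hpm a (Fin.zero_le i)
  let c : (Fin N × Fin N) × Fin s → ℝ := fun q =>
    firstZero (f q.1.1) (f q.1.2) (p q.1.1 q.2.castSucc)
  let S : Finset ℝ := insert 0 (insert 1 (Finset.univ.image c))
  have hS : ∀ w ∈ S, w ∈ Set.Icc (0 : ℝ) 1 := by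
    intro w hw
    simp only [S, Finset.mem_insert, Finset.mem_image, Finset.mem_univ, true_and] at hw
    rcases hw with rfl | rfl | ⟨q, rfl⟩
    · simp
    · simp
    · exact firstZero_mem _ _ _ (hp _ _)
  have h0S : (0 : ℝ) ∈ S := by simp [S]
  have h1S : (1 : ℝ) ∈ S := by simp [S]
  have hcS : ∀ q, c q ∈ S := fun q => by simp [S]
  have hcard : S.card ≤ N ^ 2 * s + 2 := by
    have h1 : (Finset.univ.image c).card ≤ N ^ 2 * s := by
      refine Finset.card_image_le.trans (le_of_eq ?_)
      simp [sq]
    have h2 := Finset.card_insert_le (1 : ℝ) (Finset.univ.image c)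
    have h3 := Finset.card_insert_le (0 : ℝ) (insert 1 (Finset.univ.image c))
    change (insert 0 (insert 1 (Finset.univ.image c))).card ≤ _
    omega
  have hcard2 : 2 ≤ S.card := by
    have : 1 < S.card := Finset.one_lt_card.mpr ⟨0, h0S, 1, h1S, zero_ne_one⟩
    omega
  have key : ∀ a b x y, x ∈ Set.Icc (0 : ℝ) 1 → y ∈ Set.Icc (0 : ℝ) 1 → x < y →
      (f a x - f b x) * (f a y - f b y) < 0 → ∃ w ∈ S, x < w ∧ w < y := by
    intro a b x y hx hy hxy hneg
    have hsub : Set.Icc x y ⊆ Set.Icc (0 : ℝ) 1 := Set.Icc_subset_Icc hx.1 hy.2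
    have hc : ContinuousOn (fun w => f a w - f b w) (Set.Icc x y) :=
      ((hfc a).sub (hfc b)).mono hsub
    have hxne : f a x ≠ f b x := by
      intro h; simp [h] at hneg
    have hyne : f a y ≠ f b y := by
      intro h; simp [h] at hneg
    obtain ⟨z, hz, hz0⟩ : ∃ z ∈ Set.Icc x y, f a z - f b z = 0 := by
      rcases mul_neg_iff.mp hneg with h | h
      · exact intermediate_value_Icc' hxy.le hc ⟨h.2.le, h.1.le⟩
      · exact intermediate_value_Icc hxy.le hc ⟨h.1.le, h.2.le⟩
    have hzab : f a z = f b z := by linarith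
    have hxz : x < z := lt_of_le_of_ne hz.1 (by rintro rfl; exact hxne hzab)
    have hzy : z < y := lt_of_le_of_ne hz.2 (by rintro rfl; exact hyne hzab)
    obtain ⟨i, hi⟩ := exists_piece hs (p a) (hp0 a) (hp1 a) z (hsub hz)
    obtain ⟨j, hj⟩ := exists_piece hs (p b) (hp0 b) (hp1 b) z (hsub hz)
    have hb := firstZero_between (f a) (f b) (max (p a i.castSucc) (p b j.castSucc)) x z
      (sl a i) (ic a i) (sl b j) (ic b j) (max_le hi.1 hj.1) (hsub hz).2
      (fun w hw => hpl a i w ⟨(le_max_left _ _).trans hw.1, hw.2.trans hi.2⟩)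
      (fun w hw => hpl b j w ⟨(le_max_right _ _).trans hw.1, hw.2.trans hj.2⟩)
      hzab hxne hxz
    refine ⟨_, ?_, hb.1, hb.2.trans_lt hzy⟩
    rcases max_choice (p a i.castSucc) (p b j.castSucc) with h | h
    · rw [h]; exact hcS ((a, b), i)
    · rw [h, firstZero_comm]; exact hcS ((b, a), j)
  obtain ⟨T, hT⟩ : ∃ T, S.card = T + 1 := ⟨S.card - 1, by omega⟩
  let t := S.orderEmbOfFin hT
  have htS : ∀ i, t i ∈ S := fun i => S.orderEmbOfFin_mem hT i
  have hsurj : ∀ w ∈ S, ∃ i, t i = w := by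
    intro w hw
    have : w ∈ Set.range t := by
      rw [Finset.range_orderEmbOfFin]; exact hw
    exact this
  have hmono : Monotone t := t.monotone
  refine ⟨T, by omega, by omega, t, ?_, ?_, hmono, ?_⟩
  · obtain ⟨i, hi⟩ := hsurj 0 h0S
    exact le_antisymm (hi ▸ hmono (Fin.zero_le i)) (hS _ (htS _)).1
  · obtain ⟨i, hi⟩ := hsurj 1 h1S
    exact le_antisymm (hS _ (htS _)).2 (hi ▸ hmono (Fin.le_last i))
  · intro j a b
    have main : ∀ x ∈ Set.Icc (t j.castSucc) (t j.succ),
        ∀ y ∈ Set.Icc (t j.castSucc) (t j.succ), x < y →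
        0 ≤ (f a x - f b x) * (f a y - f b y) := by
      intro x hx y hy hxy
      by_contra hneg
      have hsub : Set.Icc (t j.castSucc) (t j.succ) ⊆ Set.Icc (0 : ℝ) 1 :=
        Set.Icc_subset_Icc (hS _ (htS _)).1 (hS _ (htS _)).2
      obtain ⟨w, hw, h1, h2⟩ := key a b x y (hsub hx) (hsub hy) hxy (not_le.mp hneg)
      obtain ⟨i, rfl⟩ := hsurj w hw
      have l1 : j.castSucc < i := t.lt_iff_lt.mp (hx.1.trans_lt h1)
      have l2 : i < j.succ := t.lt_iff_lt.mp (h2.trans_le hy.2)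
      rw [Fin.lt_def] at l1 l2
      simp at l1 l2
      omega
    intro x hx y hy
    rcases lt_trichotomy x y with h | h | h
    · exact main x hx y hy h
    · subst h; exact mul_self_nonneg _
    · rw [mul_comm]; exact main y hy x hx h
end
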